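/- Suppose 1/3 < α ≤ 1 and let k ≥ 1 and M ≥ 1 be integers. Let X ⊆ V and let I be an independent set contained in the common neighborhood ∩_{x∈X} N(x) with |I| ≥ (k+1)·M, such that every vertex u ∈ V∖X satisfies |N(u) ∩ I| ≤ M. Let v ∈ I be a vertex such that degc(w) ≥ degc(v) for every w ∈ I. Then for every set S ⊆ V with |S| = k and v ∈ S, there exists a vertex v' ∈ I∖S with v' ≠ v such that val((S∖{v}) ∪ {v'}) ≥ val(S). -/

import Mathlib

open Finset

variable {V : Type*} [Fintype V] [DecidableEq V]

/-- Number of edges of `G` with both endpoints in `S`. -/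
def mIn (G : SimpleGraph V) [DecidableRel G.Adj] (S : Finset V) : ℕ :=
  (G.edgeFinset.filter (fun e => ∀ v ∈ e, v ∈ S)).card

/-- Number of edges of `G` with exactly one endpoint in `S`. -/
def mCut (G : SimpleGraph V) [DecidableRel G.Adj] (S : Finset V) : ℕ :=
  (G.edgeFinset.filter (fun e => (∃ v ∈ e, v ∈ S) ∧ ∃ v ∈ e, v ∉ S)).card

/-- `val(S) = α·(m(S, V∖S) + counter(S)) + (1−α)·m(S)`. -/
noncomputable def val (G : SimpleGraph V) [DecidableRel G.Adj] (counter : V → ℕ) (α : ℝ)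
    (S : Finset V) : ℝ :=
  α * ((mCut G S : ℝ) + ∑ v ∈ S, (counter v : ℝ)) + (1 - α) * (mIn G S : ℝ)

/-- `degc(v) = deg(v) + counter(v)`. -/
def degc (G : SimpleGraph V) [DecidableRel G.Adj] (counter : V → ℕ) (v : V) : ℕ :=
  G.degree v + counter v

/-- `contribution(v, T) = α·degc(v) + (1−3α)·|N(v) ∩ T|`. -/
noncomputable def contribution (G : SimpleGraph V) [DecidableRel G.Adj] (counter : V → ℕ)
    (α : ℝ) (v : V) (T : Finset V) : ℝ :=
  α * (degc G counter v : ℝ) + (1 - 3 * α) * ((G.neighborFinset v ∩ T).card : ℝ)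

/-- `I` is an independent set of `G`: pairwise non-adjacent vertices. -/
def IndepOn (G : SimpleGraph V) (I : Finset V) : Prop :=
  ∀ u ∈ I, ∀ w ∈ I, u ≠ w → ¬ G.Adj u w

/-- `G` is `c`-closed: every pair of distinct non-adjacent vertices has at most
`c − 1` common neighbors. -/
def CClosed (G : SimpleGraph V) [DecidableRel G.Adj] (c : ℕ) : Prop :=
  ∀ u v : V, u ≠ v → ¬ G.Adj u v → (G.neighborFinset u ∩ G.neighborFinset v).card ≤ c - 1

/-!
Counting edge endpoints in `S` gives `val(S) = α ∑_{v ∈ S} degc(v) + (1 - 3α) m(S)`, so swapping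
`v` for a vertex `w` of no smaller `degc` with no more neighbors in `S ∖ {v}` does not decrease
`val` when `1 / 3 ≤ α`. Each vertex of `S ∖ X` rules out at most `M` vertices of `I`, namely those
in its closed neighborhood. As `|S| · M < |I|`, some `w ∈ I` survives; its neighbors in `S` all lie
in `X`, and these are also neighbors of `v`.
-/

variable {G : SimpleGraph V} {S T : Finset V} {v w : V}

lemma card_filter_mem_edge {e : Sym2 V} (he : e ∈ G.edgeSet) :
    #{v ∈ S | v ∈ e} = (if (∃ v ∈ e, v ∈ S) ∧ ∃ v ∈ e, v ∉ S then 1 else 0) +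
      2 * (if ∀ v ∈ e, v ∈ S then 1 else 0) := by
  induction e with | _ a b =>
  have hab : a ≠ b := G.ne_of_adj he
  by_cases ha : a ∈ S <;> by_cases hb : b ∈ S <;>
    simp [Finset.filter_or, Finset.filter_eq', ha, hb, hab]

variable [DecidableRel G.Adj]

lemma mCut_add_two_mul_mIn : mCut G S + 2 * mIn G S = ∑ v ∈ S, G.degree v := by
  calc mCut G S + 2 * mIn G S
      = ∑ e ∈ G.edgeFinset, #{v ∈ S | v ∈ e} := by
        rw [sum_congr rfl fun e he ↦ card_filter_mem_edge (G.mem_edgeFinset.1 he),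
          sum_add_distrib, ← mul_sum, sum_boole, sum_boole]
        rfl
    _ = ∑ v ∈ S, #{e ∈ G.edgeFinset | v ∈ e} :=
        (sum_card_bipartiteAbove_eq_sum_card_bipartiteBelow (· ∈ ·)).symm
    _ = ∑ v ∈ S, G.degree v := by
        simp only [← G.incidenceFinset_eq_filter, G.card_incidenceFinset_eq_degree]

lemma val_eq_sum_degc_add_mIn (counter : V → ℕ) (α : ℝ) :
    val G counter α S = α * ∑ v ∈ S, (degc G counter v : ℝ) + (1 - 3 * α) * mIn G S := by
  have hcount : (mCut G S : ℝ) + 2 * mIn G S = ∑ v ∈ S, (G.degree v : ℝ) := by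
    exact_mod_cast mCut_add_two_mul_mIn
  simp only [_root_.val, degc, Nat.cast_add, sum_add_distrib, ← hcount]
  ring

lemma mIn_insert (hw : w ∉ T) : mIn G (insert w T) = mIn G T + #(G.neighborFinset w ∩ T) := by
  have hsplit : {e ∈ G.edgeFinset | ∀ v ∈ e, v ∈ insert w T} =
      {e ∈ G.edgeFinset | ∀ v ∈ e, v ∈ T} ∪ (G.neighborFinset w ∩ T).image (s(w, ·)) := by
    ext e
    induction e with | _ a b =>
    have hne := G.ne_of_adj (a := a) (b := b)
    have hcomm := G.adj_comm a b
    simp only [mem_filter, SimpleGraph.mem_edgeFinset, SimpleGraph.mem_edgeSet, Sym2.mem_iff,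
      mem_union, mem_image, mem_inter, SimpleGraph.mem_neighborFinset, Sym2.eq_iff, mem_insert,
      forall_eq_or_imp, forall_eq]
    grind
  have hdisj : Disjoint {e ∈ G.edgeFinset | ∀ v ∈ e, v ∈ T}
      ((G.neighborFinset w ∩ T).image (s(w, ·))) := by
    simp only [disjoint_right, forall_mem_image, mem_filter]
    exact fun u _ hu ↦ hw (hu.2 w (Sym2.mem_mk_left w u))
  rw [mIn, hsplit, card_union_of_disjoint hdisj,
    card_image_of_injective _ fun _ _ ↦ Sym2.congr_right.1, mIn]

lemma val_insert (counter : V → ℕ) (α : ℝ) (hw : w ∉ T) :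
    val G counter α (insert w T) = val G counter α T + contribution G counter α w T := by
  simp only [val_eq_sum_degc_add_mIn, contribution, sum_insert hw, mIn_insert hw, Nat.cast_add]
  ring

lemma contribution_le_contribution {counter : V → ℕ} {α : ℝ} (hα : 1 / 3 ≤ α)
    (hdeg : degc G counter v ≤ degc G counter w)
    (hcard : #(G.neighborFinset w ∩ T) ≤ #(G.neighborFinset v ∩ T)) :
    contribution G counter α v T ≤ contribution G counter α w T := by
  have hdeg' : α * (degc G counter v : ℝ) ≤ α * degc G counter w := by gcongr
  have hcard' : (3 * α - 1) * (#(G.neighborFinset w ∩ T) : ℝ) ≤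
      (3 * α - 1) * #(G.neighborFinset v ∩ T) := by gcongr; linarith
  unfold contribution
  linarith

lemma val_le_val_insert_erase {counter : V → ℕ} {α : ℝ} (hα : 1 / 3 ≤ α) (hvS : v ∈ S)
    (hwS : w ∉ S) (hdeg : degc G counter v ≤ degc G counter w)
    (hadj : ∀ u ∈ S, G.Adj w u → G.Adj v u) :
    val G counter α S ≤ val G counter α (insert w (S.erase v)) := by
  have hsub : G.neighborFinset w ∩ S.erase v ⊆ G.neighborFinset v ∩ S.erase v := by
    intro u hu
    rw [mem_inter, G.mem_neighborFinset] at hu ⊢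
    exact ⟨hadj u (mem_of_mem_erase hu.2) hu.1, hu.2⟩
  calc val G counter α S
      = val G counter α (S.erase v) + contribution G counter α v (S.erase v) := by
        rw [← val_insert counter α (notMem_erase v S), insert_erase hvS]
    _ ≤ val G counter α (S.erase v) + contribution G counter α w (S.erase v) := by
        gcongr
        exact contribution_le_contribution hα hdeg (card_le_card hsub)
    _ = val G counter α (insert w (S.erase v)) :=
        (val_insert counter α fun h ↦ hwS (mem_of_mem_erase h)).symm

lemma exists_mem_notMem_forall_not_adj {A I : Finset V} {M : ℕ}
    (hle : ∀ u ∈ A, #(insert u (G.neighborFinset u) ∩ I) ≤ M) (hcard : #A * M < #I) :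
    ∃ w ∈ I, w ∉ A ∧ ∀ u ∈ A, ¬ G.Adj u w := by
  obtain ⟨w, hwI, hw⟩ := exists_mem_notMem_of_card_lt_card
    ((card_biUnion_le_card_mul A _ M hle).trans_lt hcard)
  have havoid : ∀ u ∈ A, w ≠ u ∧ ¬ G.Adj u w := by simpa [hwI] using hw
  exact ⟨w, hwI, fun hwA ↦ (havoid w hwA).1 rfl, fun u hu ↦ (havoid u hu).2⟩

lemma IndepOn.card_insert_neighborFinset_inter_le {I : Finset V} (hI : IndepOn G I) {M : ℕ}
    (hM : 1 ≤ M) {u : V} (hu : #(G.neighborFinset u ∩ I) ≤ M) :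
    #(insert u (G.neighborFinset u) ∩ I) ≤ M := by
  by_cases huI : u ∈ I
  · have hempty : G.neighborFinset u ∩ I = ∅ := by
      refine disjoint_iff_inter_eq_empty.1 (disjoint_left.2 fun w huw hwI ↦ ?_)
      rw [G.mem_neighborFinset] at huw
      exact hI u huI w hwI huw.ne huw
    simpa [insert_inter_of_mem huI, hempty] using hM
  · rwa [insert_inter_of_notMem huI]

theorem indep_set_exchange_general {counter : V → ℕ} {α : ℝ} (hα : 1 / 3 ≤ α) {M : ℕ}
    {X I : Finset V} (hsub : ∀ x ∈ X, I ⊆ G.neighborFinset x)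
    (hfew : ∀ u ∈ S \ X, #(insert u (G.neighborFinset u) ∩ I) ≤ M) (hcard : #S * M < #I)
    (hvI : v ∈ I) (hvmin : ∀ w ∈ I, degc G counter v ≤ degc G counter w) (hvS : v ∈ S) :
    ∃ w ∈ I, w ∉ S ∧ val G counter α S ≤ val G counter α (insert w (S.erase v)) := by
  have hadjX {x u : V} (hx : x ∈ X) (hu : u ∈ I) : G.Adj x u :=
    (G.mem_neighborFinset x u).1 (hsub x hx hu)
  have hcard' : #(S \ X) * M < #I :=
    (Nat.mul_le_mul_right M (card_le_card sdiff_subset)).trans_lt hcard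
  obtain ⟨w, hwI, hwSX, hw⟩ := exists_mem_notMem_forall_not_adj hfew hcard'
  have hwX : w ∉ X := fun hwX ↦ G.loopless.irrefl w (hadjX hwX hwI)
  have hwS : w ∉ S := fun hwS ↦ hwSX (mem_sdiff.2 ⟨hwS, hwX⟩)
  have hadj : ∀ u ∈ S, G.Adj w u → G.Adj v u := by
    intro u huS hwu
    have huX : u ∈ X := by
      by_contra huX
      exact hw u (mem_sdiff.2 ⟨huS, huX⟩) hwu.symm
    exact (hadjX huX hvI).symm
  exact ⟨w, hwI, hwS, val_le_val_insert_erase hα hvS hwS (hvmin w hwI) hadj⟩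

/-- Exchange within a large independent set `I` in the common neighborhood of `X`
(for `1/3 < α ≤ 1`): the worst vertex `v` of `I` can be replaced in any `k`-set `S`
containing it by some other vertex of `I` without decreasing `val`. -/
theorem indep_set_exchange (G : SimpleGraph V) [DecidableRel G.Adj]
    (counter : V → ℕ) (α : ℝ) (hα1 : 1 / 3 < α) (hα2 : α ≤ 1)
    (k M : ℕ) (hk : 1 ≤ k) (hM : 1 ≤ M)
    (X I : Finset V) (hIind : IndepOn G I)
    (hIsub : ∀ x ∈ X, I ⊆ G.neighborFinset x)
    (hIcard : (k + 1) * M ≤ I.card)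
    (hfew : ∀ u : V, u ∉ X → (G.neighborFinset u ∩ I).card ≤ M)
    (v : V) (hvI : v ∈ I) (hvmin : ∀ w ∈ I, degc G counter v ≤ degc G counter w) :
    ∀ S : Finset V, S.card = k → v ∈ S →
      ∃ v' ∈ I, v' ∉ S ∧ v' ≠ v ∧
        val G counter α (insert v' (S.erase v)) ≥ val G counter α S := by
  rintro S rfl hvS
  obtain ⟨w, hwI, hwS, hval⟩ := indep_set_exchange_general hα1.le hIsub
    (fun u hu ↦ hIind.card_insert_neighborFinset_inter_le hM (hfew u (mem_sdiff.1 hu).2))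
    (by linarith) hvI hvmin hvS
  exact ⟨w, hwI, hwS, (ne_of_mem_of_not_mem hvS hwS).symm, hval⟩
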